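/- For every odd k ≥ 3 and every n, the online Ramsey number satisfies r̃(C_k, P_n) ≤ 3n + 50k, where P_n is the path on n vertices. -/

import Mathlib

open SimpleGraph

/-- A board state: the set of red edges and the set of blue edges. -/
abbrev Board : Type := Set (Sym2 ℕ) × Set (Sym2 ℕ)

/-- The set of already colored edges of a board. -/
def Board.colored (B : Board) : Set (Sym2 ℕ) := B.1 ∪ B.2

/-- A Builder strategy selects an edge given the current board. -/
abbrev BuilderStrat : Type := Board → Sym2 ℕ

/-- A Painter strategy colors the selected edge (true = red, false = blue). -/
abbrev PainterStrat : Type := Board → Sym2 ℕ → Bool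

/-- The board after `t` rounds of play from `init`. -/
def playGame (b : BuilderStrat) (p : PainterStrat) (init : Board) : ℕ → Board
  | 0 => init
  | t + 1 =>
      let B := playGame b p init t
      let e := b B
      if p B e then (insert e B.1, B.2) else (B.1, insert e B.2)

/-- Builder's strategy is valid from `init`: along any play it always selects a
previously unselected non-loop edge. -/
def ValidFrom (b : BuilderStrat) (init : Board) : Prop :=
  ∀ p : PainterStrat, ∀ t : ℕ,
    ¬ (b (playGame b p init t)).IsDiag ∧
      b (playGame b p init t) ∉ (playGame b p init t).colored

/-- Builder can force the winning condition `W` within `t` rounds, starting from `init`. -/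
def BuilderWinsIn (init : Board) (W : Board → Prop) (t : ℕ) : Prop :=
  ∃ b : BuilderStrat, ValidFrom b init ∧
    ∀ p : PainterStrat, ∃ s, s ≤ t ∧ W (playGame b p init s)

/-- `G` contains a copy of `H`. -/
def HasCopy {α β : Type} (H : SimpleGraph α) (G : SimpleGraph β) : Prop :=
  ∃ f : α ↪ β, ∀ x y, H.Adj x y → G.Adj (f x) (f y)

/-- The red part of the board contains a copy of `H`. -/
def RedCopy {α : Type} (H : SimpleGraph α) (B : Board) : Prop :=
  HasCopy H (fromEdgeSet B.1)

/-- The blue part of the board contains a copy of `H`. -/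
def BlueCopy {α : Type} (H : SimpleGraph α) (B : Board) : Prop :=
  HasCopy H (fromEdgeSet B.2)

/-- The empty board. -/
def emptyBoard : Board := (∅, ∅)

/-- Winning condition: a red `C_k` or a blue `C_n`. -/
def WinCC (k n : ℕ) (B : Board) : Prop :=
  RedCopy (cycleGraph k) B ∨ BlueCopy (cycleGraph n) B

/-- Winning condition: a red `C_k` or a blue path on `n` vertices. -/
def WinCP (k n : ℕ) (B : Board) : Prop :=
  RedCopy (cycleGraph k) B ∨ BlueCopy (pathGraph n) B

/-- A board consisting of a single blue cycle on the vertices `0, …, m-1`. -/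
def blueCycleBoard (m : ℕ) : Board :=
  (∅, {e | ∃ i : ℕ, i < m ∧ e = s(i, (i + 1) % m)})

/-- A board consisting of a single blue path on the vertices `0, …, m-1`. -/
def bluePathBoard (m : ℕ) : Board :=
  (∅, {e | ∃ i : ℕ, i + 1 < m ∧ e = s(i, i + 1)})

/-!
Builder first extends two blue paths until a red triangle appears, which costs at most three rounds
per covered vertex, up to a constant. From then on he keeps a stack of disjoint blue paths whose
heads form a red path: joining a new path to the top of the stack either lengthens the red path or
merges two blue paths. Once `k` heads are stacked, the edge between the outermost ones must be blue
and merges their paths. Hence fewer than `k` blue paths eventually cover `n + 3k` vertices, still at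
three rounds per vertex.

The remaining steps cost `O(k)` rounds. Cutting heads off the bottom of the stack prolongs the red
path to a trunk of `2k - 5` vertices. Two trunk vertices at distance `k - 2` cannot both be joined
in red to the same vertex outside, so among three ends of blue paths two have a blue edge to the
same one of them, and their paths merge through it. Sliding the pair along the trunk, Builder
repeats this until two blue paths are left. If all edges between an initial segment of each of them
are red, they contain a red zigzag on `k - 1` vertices. Each vertex of the triangle sees in red both
the first and the last zigzag vertex on one of the two paths, for otherwise it links these paths in
blue. Two vertices of the triangle do so for the same path, and together with the zigzag without one
of its ends they form a red `C_k`; this is where `k` is odd.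
-/

section Game

variable {W : Board → Prop} {B : Board} {m m' : ℕ}

theorem exists_uncolored_edge (hB : B.colored.Finite) :
    ∃ e : Sym2 ℕ, ¬ e.IsDiag ∧ e ∉ B.colored := by
  have hinj : Function.Injective fun i : ℕ => s(0, i + 1) := fun i j h => by simpa using h
  obtain ⟨e, ⟨i, rfl⟩, hi⟩ :=
    (Set.infinite_range_of_injective hinj).exists_notMem_finite hB
  exact ⟨_, by simp, hi⟩

theorem playGame_colored_finite (b : BuilderStrat) (p : PainterStrat) (hB : B.colored.Finite) :
    ∀ t, (playGame b p B t).colored.Finite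
  | 0 => hB
  | t + 1 => by
    have ih := Set.finite_union.1 (playGame_colored_finite b p hB t)
    simp only [playGame]
    split_ifs
    · exact (ih.1.insert _).union ih.2
    · exact ih.1.union (ih.2.insert _)

/-- From the board `B`, Builder can reach the winning condition `W` within `m` rounds. The edge of
each round is chosen knowing Painter's answers so far, which avoids mentioning strategies. -/
def CanForce (W : Board → Prop) : ℕ → Board → Prop
  | 0, B => W B
  | m + 1, B => W B ∨ ∃ e : Sym2 ℕ, ¬ e.IsDiag ∧ e ∉ B.colored ∧
      CanForce W m (insert e B.1, B.2) ∧ CanForce W m (B.1, insert e B.2)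

theorem CanForce.succ (h : CanForce W m B) : CanForce W (m + 1) B := by
  induction m generalizing B with
  | zero => exact Or.inl h
  | succ m ih =>
    obtain h | ⟨e, he, heB, hred, hblue⟩ := h
    · exact Or.inl h
    · exact Or.inr ⟨e, he, heB, ih hred, ih hblue⟩

theorem CanForce.mono (hm : m ≤ m') (h : CanForce W m B) : CanForce W m' B :=
  monotone_nat_of_le_succ (f := (CanForce W · B)) (fun _ => CanForce.succ) hm h

theorem CanForce.of_win (h : W B) : CanForce W m B :=
  CanForce.mono (Nat.zero_le m) h

/-- A strategy sees only the board, not the number of remaining rounds, so the selected edge has to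
serve every budget at once: it is the one belonging to the least sufficient budget. -/
theorem exists_forcing_edge (W : Board → Prop) (hB : B.colored.Finite) :
    ∃ e : Sym2 ℕ, ¬ e.IsDiag ∧ e ∉ B.colored ∧ ∀ m, CanForce W (m + 1) B →
      W B ∨ (CanForce W m (insert e B.1, B.2) ∧ CanForce W m (B.1, insert e B.2)) := by
  classical
  by_cases hW : ¬ W B ∧ ∃ m, CanForce W (m + 1) B
  · obtain ⟨hWB, hex⟩ := hW
    obtain ⟨e, he, heB, hred, hblue⟩ := (Nat.find_spec hex).resolve_left hWB
    exact ⟨e, he, heB, fun m hm => Or.inr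
      ⟨hred.mono (Nat.find_min' hex hm), hblue.mono (Nat.find_min' hex hm)⟩⟩
  · obtain ⟨e, he, heB⟩ := exists_uncolored_edge hB
    exact ⟨e, he, heB, fun m hm => Or.inl (by_contra fun h => hW ⟨h, m, hm⟩)⟩

theorem CanForce.builderWinsIn (hB : B.colored.Finite) (h : CanForce W m B) :
    BuilderWinsIn B W m := by
  choose! b hb_diag hb_new hb using
    fun (B : Board) (hB : B.colored.Finite) => exists_forcing_edge W hB
  have hfin p := playGame_colored_finite b p hB
  refine ⟨b, fun p t => ⟨hb_diag _ (hfin p t), hb_new _ (hfin p t)⟩, fun p => ?_⟩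
  have reach : ∀ m t, CanForce W m (playGame b p B t) →
      ∃ s, s ≤ t + m ∧ W (playGame b p B s) := by
    intro m
    induction m with
    | zero => exact fun t ht => ⟨t, le_rfl, ht⟩
    | succ m ih =>
      intro t ht
      obtain hW | ⟨hred, hblue⟩ := hb _ (hfin p t) m ht
      · exact ⟨t, by omega, hW⟩
      · obtain ⟨s, hs, hW⟩ := ih (t + 1) (by simp only [playGame]; split_ifs <;> assumption)
        exact ⟨s, by omega, hW⟩
  simpa using reach m 0 h

end Game

section Walks

variable {α : Type*} {E E' : Set (Sym2 α)} {e : Sym2 α} {u v : α} {l l' : List α} {k n : ℕ}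

/-- Consecutive vertices of `l` are joined by edges in `E`. Distinctness of the vertices is not
included: it is recorded jointly for all the walks of a position. -/
def IsWalk (E : Set (Sym2 α)) (l : List α) : Prop :=
  l.IsChain fun u v => s(u, v) ∈ E

@[simp]
theorem isWalk_nil : IsWalk E [] := List.isChain_nil

@[simp]
theorem isWalk_singleton : IsWalk E [u] := List.isChain_singleton u

theorem isWalk_cons_cons : IsWalk E (u :: v :: l) ↔ s(u, v) ∈ E ∧ IsWalk E (v :: l) :=
  List.isChain_cons_cons

theorem isWalk_append : IsWalk E (l ++ l') ↔
    IsWalk E l ∧ IsWalk E l' ∧ ∀ x ∈ l.getLast?, ∀ y ∈ l'.head?, s(x, y) ∈ E :=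
  List.isChain_append

theorem IsWalk.mono (hE : E ⊆ E') (h : IsWalk E l) : IsWalk E' l :=
  h.imp fun _ _ he => hE he

theorem IsWalk.insert (h : IsWalk E l) : IsWalk (insert e E) l :=
  h.mono (Set.subset_insert _ _)

theorem IsWalk.cons (he : s(u, v) ∈ E) (h : IsWalk E (v :: l)) : IsWalk E (u :: v :: l) :=
  isWalk_cons_cons.2 ⟨he, h⟩

theorem IsWalk.tail (h : IsWalk E (v :: l)) : IsWalk E l :=
  List.IsChain.tail h

theorem IsWalk.reverse (h : IsWalk E l) : IsWalk E l.reverse :=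
  List.isChain_reverse.2 (h.imp fun _ _ he => by rwa [Sym2.eq_swap])

theorem IsWalk.join (h : IsWalk E (u :: l)) (h' : IsWalk E (v :: l')) (he : s(u, v) ∈ E) :
    IsWalk E (l.reverse ++ u :: v :: l') := by
  have := isWalk_append.2 ⟨h.reverse, h', by simpa using he⟩
  simpa using this

theorem IsWalk.hasCopy_pathGraph {α : Type} {E : Set (Sym2 α)} {l : List α} (h : IsWalk E l)
    (hl : l.Nodup) (hn : n ≤ l.length) :
    HasCopy (pathGraph n) (fromEdgeSet E) := by
  have hinj : Function.Injective fun i : Fin n => l[i.val]'(i.2.trans_le hn) := fun i j hij =>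
    Fin.ext (hl.getElem_inj_iff.1 hij)
  have edge (x y : Fin n) (hxy : x.val + 1 = y.val) :
      s(l[x.val]'(x.2.trans_le hn), l[y.val]'(y.2.trans_le hn)) ∈ E := by
    simpa only [hxy] using List.isChain_iff_getElem.1 h x.val (by omega)
  refine ⟨⟨_, hinj⟩, fun x y hxy => (fromEdgeSet_adj _).2 ⟨?_, hinj.ne hxy.ne⟩⟩
  obtain hxy | hxy := pathGraph_adj.1 hxy
  · exact edge x y hxy
  · exact Sym2.eq_swap ▸ edge y x hxy

/-- `E` contains a cycle on `k` vertices, given as a walk `v, l, v` around it. -/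
def HasCycle (k : ℕ) (E : Set (Sym2 α)) : Prop :=
  ∃ v l, (v :: l).Nodup ∧ l.length + 1 = k ∧ IsWalk E (v :: l ++ [v])

theorem HasCycle.mono (hE : E ⊆ E') : HasCycle k E → HasCycle k E' :=
  fun ⟨v, l, hnd, hk, hw⟩ => ⟨v, l, hnd, hk, hw.mono hE⟩

theorem val_add_one_mod_of_sub_eq_one {m : ℕ} {x y : Fin m} (h : (y - x).val = 1) :
    (x.val + 1) % m = y.val := by
  have : NeZero m := ⟨by rintro rfl; exact x.elim0⟩
  rw [← h, ← Fin.val_add, add_sub_cancel]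

theorem HasCycle.hasCopy_cycleGraph {α : Type} {E : Set (Sym2 α)} (h : HasCycle k E) :
    HasCopy (cycleGraph k) (fromEdgeSet E) := by
  obtain ⟨v, l, hnd, rfl, hw⟩ := h
  have hinj : Function.Injective (v :: l).get := hnd.injective_get
  have edge (x y : Fin (v :: l).length) (hxy : (x.val + 1) % (l.length + 1) = y.val) :
      s((v :: l).get x, (v :: l).get y) ∈ E := by
    have hx : x.val < l.length + 1 := x.2
    have hstep := List.isChain_iff_getElem.1 hw x.val (by simpa using hx)
    rw [List.getElem_append_left hx] at hstep
    obtain hlt | hlast : x.val < l.length ∨ x.val = l.length := by omega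
    · rw [Nat.mod_eq_of_lt (by omega)] at hxy
      simpa [List.getElem_append, hlt, ← hxy] using hstep
    · rw [hlast, Nat.mod_self] at hxy
      simpa [List.getElem_append, hlast, ← hxy] using hstep
  refine ⟨⟨_, hinj⟩, fun x y hxy => (fromEdgeSet_adj _).2 ⟨?_, hinj.ne hxy.ne⟩⟩
  obtain hxy | hxy := cycleGraph_adj'.1 hxy
  · exact Sym2.eq_swap ▸ edge y x (val_add_one_mod_of_sub_eq_one hxy)
  · exact edge x y (val_add_one_mod_of_sub_eq_one hxy)

end Walks

section Positions

variable {k n m m' : ℕ} {r b : Set (Sym2 ℕ)} {l : List ℕ} {u v : ℕ}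

/-- From every board containing the red edges `r` and the blue edges `b`, Builder can force a red
`C_k` or a blue path on `n` vertices within `m` rounds. -/
def Wins (k n m : ℕ) (r b : Set (Sym2 ℕ)) : Prop :=
  ∀ B : Board, r ⊆ B.1 → b ⊆ B.2 → CanForce (WinCP k n) m B

theorem Wins.mono_rounds (hm : m ≤ m') (h : Wins k n m r b) : Wins k n m' r b :=
  fun B hr hb => (h B hr hb).mono hm

theorem Wins.ask (huv : u ≠ v) (hred : Wins k n m (insert s(u, v) r) b)
    (hblue : Wins k n m r (insert s(u, v) b)) : Wins k n (m + 1) r b := by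
  intro B hr hb
  by_cases hR : s(u, v) ∈ B.1
  · exact (hred B (Set.insert_subset hR hr) hb).succ
  by_cases hB : s(u, v) ∈ B.2
  · exact (hblue B hr (Set.insert_subset hB hb)).succ
  exact Or.inr ⟨s(u, v), by simpa using huv, by simp [Board.colored, hR, hB],
    hred _ (Set.insert_subset_insert hr) hb, hblue _ hr (Set.insert_subset_insert hb)⟩

theorem Wins.of_hasCycle (h : HasCycle k r) : Wins k n m r b :=
  fun _ hr _ => CanForce.of_win (Or.inl (h.mono hr).hasCopy_cycleGraph)

theorem Wins.of_isWalk (h : IsWalk b l) (hl : l.Nodup) (hn : n ≤ l.length) : Wins k n m r b :=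
  fun _ _ hb => CanForce.of_win (Or.inr ((h.mono hb).hasCopy_pathGraph hl hn))

theorem nodup_of_count_le {l' : List ℕ} (h : l.Nodup) (hcount : ∀ v, l'.count v ≤ l.count v) :
    l'.Nodup :=
  List.nodup_iff_count_le_one.2 fun v => (hcount v).trans (List.nodup_iff_count_le_one.1 h v)

theorem exists_notMem (l : List ℕ) : ∃ v, v ∉ l := by
  obtain ⟨v, hv⟩ := Infinite.exists_notMem_finset l.toFinset
  exact ⟨v, by simpa using hv⟩

end Positions

/-! ### Building a red triangle -/

section Triangle

variable {k n m E : ℕ} {r b : Set (Sym2 ℕ)} {T A C : List ℕ} {a c y : ℕ}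

/-- The vertices listed in `T` form a red triangle; they are kept in a list because triangles are
combined with lists of paths in disjointness assumptions. -/
def IsTriangle (r : Set (Sym2 ℕ)) (T : List ℕ) : Prop :=
  T.length = 3 ∧ T.Pairwise fun u v => s(u, v) ∈ r

theorem IsTriangle.mono {r' : Set (Sym2 ℕ)} (hr : r ⊆ r') (h : IsTriangle r T) :
    IsTriangle r' T :=
  ⟨h.1, h.2.imp fun he => hr he⟩

/-- Builder wins within `E` extra rounds once there are a red triangle and two disjoint blue paths,
if every vertex still missing on these two paths may cost three rounds. -/
def WinsFromTriangle (k n E : ℕ) : Prop :=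
  ∀ (r b : Set (Sym2 ℕ)) (T P Q : List ℕ), IsTriangle r T → IsWalk b P → IsWalk b Q →
    (T ++ (P ++ Q)).Nodup → Wins k n (E + 3 * (n - (P.length + Q.length))) r b

/-- Disjoint blue paths `a :: A` and `c :: C`, with a red edge from the head of the first one to
some vertex of the second one. -/
structure LinkedPaths (r b : Set (Sym2 ℕ)) (a : ℕ) (A : List ℕ) (c : ℕ) (C : List ℕ) : Prop where
  nodup : (a :: A ++ c :: C).Nodup
  left : IsWalk b (a :: A)
  right : IsWalk b (c :: C)
  link : ∃ t ∈ c :: C, s(a, t) ∈ r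

theorem Wins.extend_path (hnd : (a :: A).Nodup) (hA : IsWalk b (a :: A))
    (hpath : ∀ b' w, (w :: a :: A).Nodup → IsWalk b' (w :: a :: A) → Wins k n m r b')
    (hlink : ∀ r' w, LinkedPaths r' b a A w [] → Wins k n m r' b) : Wins k n (m + 1) r b := by
  obtain ⟨w, hw⟩ := exists_notMem (a :: A)
  have hwA : (w :: a :: A).Nodup := List.nodup_cons.2 ⟨hw, hnd⟩
  refine Wins.ask (u := w) (v := a) (by grind) (hlink _ w ?_)
    (hpath _ w hwA (hA.insert.cons (by simp)))
  exact ⟨nodup_of_count_le hwA (by grind), hA, isWalk_singleton, w, by simp, by simp [Sym2.eq_swap]⟩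

theorem LinkedPaths.extend (h : LinkedPaths r b a A c C)
    (hright : ∀ b' y, LinkedPaths r b' a A y (c :: C) → Wins k n (m + 1) r b')
    (hleft : ∀ r' b' y, LinkedPaths r' b' y (a :: A) c C → Wins k n m r' b')
    (hred : ∀ r' y, LinkedPaths r' b a A c C → (y :: (a :: A ++ c :: C)).Nodup →
      s(y, a) ∈ r' → s(y, c) ∈ r' → Wins k n m r' b) :
    Wins k n (m + 2) r b := by
  obtain ⟨hnd, hA, hC, t, ht, hat⟩ := h
  obtain ⟨y, hy⟩ := exists_notMem (a :: A ++ c :: C)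
  have hynd : (y :: (a :: A ++ c :: C)).Nodup := List.nodup_cons.2 ⟨hy, hnd⟩
  refine Wins.ask (u := y) (v := c) (by grind) (Wins.ask (u := y) (v := a) (by grind) ?_ ?_) ?_
  · exact hred _ y ⟨hnd, hA, hC, t, ht, by simp [hat]⟩ hynd (by simp) (by simp)
  · exact hleft _ _ y ⟨hynd, hA.insert.cons (by simp), hC.insert, c, by simp, by simp⟩
  · exact hright _ y
      ⟨List.perm_middle.nodup_iff.2 hynd, hA.insert, hC.insert.cons (by simp), t, by simp [ht], hat⟩

theorem LinkedPaths.close (h : LinkedPaths r b a A c C) (hy : (y :: (a :: A ++ c :: C)).Nodup)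
    (hya : s(y, a) ∈ r) (hyc : s(y, c) ∈ r)
    (htri : ∀ r' b' T P Q, IsTriangle r' T → IsWalk b' P → IsWalk b' Q → (T ++ (P ++ Q)).Nodup →
      P.length + Q.length = A.length + C.length → Wins k n m r' b')
    (hpath : ∀ b' d D, (d :: D).Nodup → IsWalk b' (d :: D) → 1 ≤ C.length →
      D.length = A.length + C.length + 2 → Wins k n m r b')
    (hlink : ∀ r' b' d D e, LinkedPaths r' b' d D e [] → 2 ≤ C.length →
      D.length = A.length + C.length + 1 → Wins k n m r' b') :
    Wins k n (m + 2) r b := by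
  obtain ⟨-, hA, hC, t, ht, hat⟩ := h
  have triangle {r'} (v : ℕ) (hr : r ⊆ r') (hyv : s(y, v) ∈ r') (hav : s(a, v) ∈ r') :
      IsTriangle r' [y, a, v] := ⟨rfl, by simp [hr hya, hyv, hav]⟩
  obtain rfl | htC := List.mem_cons.1 ht
  · exact htri _ _ _ _ _ (triangle t subset_rfl hyc hat) hA.tail hC.tail
      (nodup_of_count_le hy (by grind)) rfl |>.mono_rounds (by omega)
  obtain ⟨C, d, rfl⟩ := List.eq_nil_or_concat' C |>.resolve_left (List.ne_nil_of_mem htC)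
  refine Wins.ask (u := a) (v := c) (by grind) ?_ ?_
  · exact htri _ _ _ _ _ (triangle c (Set.subset_insert _ _) (by simp [hyc]) (by simp)) hA.tail
      hC.tail (nodup_of_count_le hy (by grind)) rfl |>.mono_rounds (by omega)
  set D := C.reverse ++ c :: a :: A
  have hD : IsWalk (insert s(a, c) b) (d :: D) := by
    simpa [D, Sym2.eq_swap] using hC.insert.join hA.insert (by simp [Sym2.eq_swap])
  have hDnd : (y :: d :: D).Nodup := nodup_of_count_le hy (by grind)
  refine Wins.ask (u := y) (v := d) (by grind) ?_
    (hpath _ y (d :: D) hDnd (hD.insert.cons (by simp)) (by simp) (by simp [D]; omega))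
  obtain rfl | hC0 := eq_or_ne C []
  · obtain rfl : t = d := by simpa using htC
    exact htri _ _ _ A [c] (triangle t (Set.subset_insert _ _) (by simp) (by simp [hat]))
      hA.tail.insert isWalk_singleton (nodup_of_count_le hy (by grind)) (by simp)
  · exact hlink _ _ d D y ⟨nodup_of_count_le hDnd (by grind), hD, isWalk_singleton, y, by simp,
      by simp [Sym2.eq_swap]⟩ (by simpa [Nat.one_le_iff_ne_zero] using hC0) (by simp [D]; omega)

theorem WinsFromTriangle.wins_of_path (hE : WinsFromTriangle k n E) (m : ℕ) :
    (∀ r b a A, (a :: A).Nodup → IsWalk b (a :: A) →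
      E + 20 + 2 * (n - (A.length + 1)) + n ≤ m → Wins k n m r b) ∧
    (∀ r b a A c C, LinkedPaths r b a A c C →
      E + 20 + 2 * (n - (A.length + 1)) + (n - (C.length + 1)) ≤ m → Wins k n m r b) := by
  induction m using Nat.strong_induction_on with
  | _ m ih =>
  constructor
  · intro r b a A hnd hA hm
    by_cases hn : n ≤ (a :: A).length
    · exact Wins.of_isWalk hA hnd hn
    rw [List.length_cons] at hn
    obtain ⟨m, rfl⟩ := Nat.exists_eq_add_of_le' (show 1 ≤ m by omega)
    refine Wins.extend_path hnd hA (fun b' w hw hwA => ?_) (fun r' w hw => ?_)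
    · exact (ih m (by omega)).1 _ _ _ _ hw hwA (by simp only [List.length_cons]; omega)
    · exact (ih m (by omega)).2 _ _ _ _ _ _ hw (by simp only [List.length_nil]; omega)
  · intro r b a A c C h hm
    by_cases hnA : n ≤ (a :: A).length
    · exact Wins.of_isWalk h.left h.nodup.of_append_left hnA
    by_cases hnC : n ≤ (c :: C).length
    · exact Wins.of_isWalk h.right h.nodup.of_append_right hnC
    rw [List.length_cons] at hnA hnC
    obtain ⟨m, rfl⟩ := Nat.exists_eq_add_of_le' (show 4 ≤ m by omega)
    refine h.extend (m := m + 2) (fun b' y hy => ?_) (fun r' b' y hy => ?_)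
      fun r' y h hy hya hyc => h.close hy hya hyc (fun r' b' T P Q hT hP hQ hnd hlen => ?_)
        (fun b' d D hnd hD hC hlen => ?_) (fun r' b' d D e hD hC hlen => ?_)
    · exact (ih (m + 3) (by omega)).2 _ _ _ _ _ _ hy (by simp only [List.length_cons]; omega)
    · exact (ih (m + 2) (by omega)).2 _ _ _ _ _ _ hy (by simp only [List.length_cons]; omega)
    · exact (hE r' b' T P Q hT hP hQ hnd).mono_rounds (by omega)
    · by_cases hnD : n ≤ (d :: D).length
      · exact Wins.of_isWalk hD hnd hnD
      · exact (ih m (by omega)).1 _ _ _ _ hnd hD (by rw [List.length_cons] at hnD; omega)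
    · by_cases hnD : n ≤ (d :: D).length
      · exact Wins.of_isWalk hD.left hD.nodup.of_append_left hnD
      · exact (ih m (by omega)).2 _ _ _ _ _ _ hD
          (by rw [List.length_cons] at hnD; rw [List.length_nil]; omega)

end Triangle

/-! ### A stack of blue paths on a red path -/

section Stack

variable {k n m N : ℕ} {r b : Set (Sym2 ℕ)} {T T₀ : List ℕ} {F P Q : ℕ × List ℕ}
  {I W J : List (ℕ × List ℕ)}

/-- The vertices of a list of nonempty paths, each of them given by its head and its tail. -/
def verts (I : List (ℕ × List ℕ)) : List ℕ :=
  I.flatMap fun p => p.1 :: p.2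

@[simp]
theorem verts_nil : verts [] = [] := rfl

@[simp]
theorem verts_cons : verts (P :: I) = P.1 :: (P.2 ++ verts I) := rfl

@[simp]
theorem verts_append : verts (I ++ J) = verts I ++ verts J :=
  List.flatMap_append

theorem count_verts (I : List (ℕ × List ℕ)) (v : ℕ) :
    (verts I).count v = (I.map Prod.fst).count v + (I.map Prod.snd).flatten.count v := by
  induction I with
  | nil => rfl
  | cons P I ih =>
    simp only [verts_cons, List.map_cons, List.flatten_cons, List.count_cons, List.count_append, ih]
    omega

theorem exists_verts_eq (A : List ℕ) :
    ∃ W : List (ℕ × List ℕ), verts W = A ∧ W.length ≤ 1 ∧ ∀ p ∈ W, p.1 :: p.2 = A := by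
  obtain _ | ⟨a, A⟩ := A
  · exact ⟨[], by simp⟩
  · exact ⟨[(a, A)], by simp⟩

theorem IsWalk.exists_join (hP : IsWalk b (P.1 :: P.2)) (hQ : IsWalk b (Q.1 :: Q.2))
    (he : s(P.1, Q.1) ∈ b) :
    ∃ G : ℕ × List ℕ, IsWalk b (G.1 :: G.2) ∧ (G.1 :: G.2).Perm (P.1 :: P.2 ++ Q.1 :: Q.2) := by
  obtain ⟨g, G, hG⟩ := List.exists_cons_of_ne_nil
    (by simp : P.2.reverse ++ P.1 :: Q.1 :: Q.2 ≠ [])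
  have hperm : (P.2.reverse ++ P.1 :: Q.1 :: Q.2).Perm (P.1 :: P.2 ++ Q.1 :: Q.2) := by
    clear * -
    grind
  exact ⟨(g, G), hG ▸ hP.join hQ he, hG ▸ hperm⟩

/-- Disjoint blue paths avoiding `T`: the stacked ones `I`, whose heads followed by the trunk `T₀`
form a red path, and the waiting ones `W`. -/
structure Stack (r b : Set (Sym2 ℕ)) (T : List ℕ) (I W : List (ℕ × List ℕ)) (T₀ : List ℕ) :
    Prop where
  nodup : (T ++ (verts I ++ verts W ++ T₀)).Nodup
  red : IsWalk r (I.map Prod.fst ++ T₀)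
  blue : ∀ p ∈ I ++ W, IsWalk b (p.1 :: p.2)

theorem Stack.exists_waiting (h : Stack r b T I W T₀) :
    ∃ F W', Stack r b T I (F :: W') T₀ ∧ (W = F :: W' ∨ W = [] ∧ W' = [] ∧ F.2 = []) := by
  obtain _ | ⟨F, W⟩ := W
  · obtain ⟨w, hw⟩ := exists_notMem (T ++ (verts I ++ verts [] ++ T₀))
    refine ⟨(w, []), [], ⟨?_, h.red, ?_⟩, Or.inr ⟨rfl, rfl, rfl⟩⟩
    · exact nodup_of_count_le (List.nodup_cons.2 ⟨hw, h.nodup⟩) (by grind [verts_cons, verts_nil])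
    · simpa [or_imp, forall_and] using h.blue
  · exact ⟨F, W, h, Or.inl rfl⟩

theorem Stack.join (h : Stack r b T (Q :: I) (F :: W) T₀) :
    ∃ G, Stack r (insert s(F.1, Q.1) b) T I (G :: W) T₀ ∧
      (G.1 :: G.2).length = (F.1 :: F.2 ++ Q.1 :: Q.2).length := by
  obtain ⟨hnd, hred, hblue⟩ := h
  obtain ⟨G, hG, hperm⟩ := IsWalk.exists_join (b := insert s(F.1, Q.1) b)
    (hblue F (by simp)).insert (hblue Q (by simp)).insert (Set.mem_insert _ _)
  refine ⟨G, ⟨nodup_of_count_le hnd fun v => ?_, hred.tail, fun p hp => ?_⟩, hperm.length_eq⟩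
  · have := hperm.count_eq v
    simp only [verts_cons, List.count_append, List.count_cons] at this ⊢
    omega
  · obtain hp | rfl | hp : p ∈ I ∨ p = G ∨ p ∈ W := by simpa using hp
    · exact (hblue p (by simp [hp])).insert
    · exact hG
    · exact (hblue p (by simp [hp])).insert

theorem Stack.place (h : Stack r b T I (F :: W) T₀) (hI : I = [] → T₀ = [])
    (hpush : ∀ r', r ⊆ r' → Stack r' b T (F :: I) W T₀ → Wins k n m r' b)
    (hjoin : ∀ b' I' G, Stack r b' T I' (G :: W) T₀ → I'.length + 1 = I.length →
      (verts I').length + (verts (G :: W)).length = (verts I).length + (verts (F :: W)).length →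
      Wins k n m r b') :
    Wins k n (m + 1) r b := by
  have hnd : (T ++ (verts (F :: I) ++ verts W ++ T₀)).Nodup :=
    nodup_of_count_le h.nodup (by grind [verts_cons])
  have hblue : ∀ p ∈ (F :: I) ++ W, IsWalk b (p.1 :: p.2) := fun p hp => h.blue p (by grind)
  obtain _ | ⟨Q, I⟩ := I
  · obtain rfl := hI rfl
    exact hpush r subset_rfl ⟨hnd, isWalk_singleton, hblue⟩ |>.mono_rounds (by omega)
  refine Wins.ask (u := F.1) (v := Q.1) ?_ ?_ ?_
  · intro he
    simpa [he] using hnd.of_append_right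
  · exact hpush _ (Set.subset_insert _ _) ⟨hnd, h.red.insert.cons (by simp), hblue⟩
  · obtain ⟨G, hG, hlen⟩ := h.join
    refine hjoin _ I G hG rfl ?_
    simp only [verts_cons, List.length_append, List.length_cons] at hlen ⊢
    omega

theorem Stack.hasCycle (h : Stack r b T (P :: (I ++ [Q])) W []) (he : s(P.1, Q.1) ∈ r) :
    HasCycle (I.length + 2) r := by
  refine ⟨P.1, (I ++ [Q]).map Prod.fst, ?_, by simp, ?_⟩
  · refine nodup_of_count_le h.nodup fun v => ?_
    have := count_verts (P :: (I ++ [Q])) v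
    simp only [List.map_cons, List.count_append] at this ⊢
    omega
  · have hw : IsWalk r (P.1 :: (I ++ [Q]).map Prod.fst) := by simpa using h.red
    exact isWalk_append.2 ⟨hw, isWalk_singleton, by simp [List.getLast?_cons, Sym2.eq_swap, he]⟩

theorem Stack.unstack (h : Stack r b T (P :: I) W T₀) : Stack r b T I (P :: W) T₀ :=
  ⟨nodup_of_count_le h.nodup (by grind [verts_cons]), h.red.tail,
    fun p hp => h.blue p (by grind)⟩

theorem length_verts_reverse : (verts I.reverse).length = (verts I).length :=
  (I.reverse_perm.flatMap_right _).length_eq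

theorem Stack.reverse (h : Stack r b T I W []) : Stack r b T I.reverse W [] := by
  refine ⟨nodup_of_count_le h.nodup fun v => ?_, ?_, fun p hp => h.blue p (by simpa using hp)⟩
  · have := (I.reverse_perm.flatMap_right fun p => p.1 :: p.2).count_eq v
    simp only [List.count_append, verts] at this ⊢
    omega
  · simpa using IsWalk.reverse (by simpa using h.red : IsWalk r (I.map Prod.fst))

/-- Closing the red path of `k` heads creates a red cycle unless the outermost paths get joined. -/
theorem Stack.close (h : Stack r b T I W []) (hI : I.length = k) (hk : 2 ≤ k)
    (hjoin : ∀ b' I' G, Stack r b' T I' (G :: W) [] → I'.length + 2 = k →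
      (verts I').length + (verts (G :: W)).length = (verts I).length + (verts W).length →
      Wins k n m r b') :
    Wins k n (m + 1) r b := by
  obtain ⟨P, I, rfl⟩ := List.exists_cons_of_length_pos (by omega : 0 < I.length)
  obtain rfl | ⟨I, Q, rfl⟩ := I.eq_nil_or_concat'
  · simp only [List.length_cons, List.length_nil] at hI
    omega
  have hPQ : Stack r b T (Q :: I.reverse) (P :: W) [] := by simpa using h.unstack.reverse
  refine Wins.ask (u := P.1) (v := Q.1) ?_ ?_ ?_
  · intro he
    simpa [he] using h.nodup.of_append_right
  · have hcycle : Stack (insert s(P.1, Q.1) r) b T (P :: (I ++ [Q])) W [] :=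
      ⟨h.nodup, h.red.insert, h.blue⟩
    exact Wins.of_hasCycle (by simpa [← hI] using hcycle.hasCycle (Set.mem_insert _ _))
  · obtain ⟨G, hG, hlen⟩ := hPQ.join
    refine hjoin _ _ G hG (by simpa using hI) ?_
    simp only [verts_cons, verts_append, verts_nil, length_verts_reverse, List.length_append,
      List.length_cons, List.length_nil] at hlen ⊢
    omega

theorem Wins.grow_stack (m₀ : ℕ) (hk : 2 ≤ k) (hcover : ∀ r' b' I, r ⊆ r' → Stack r' b' T I [] [] →
      I.length < k → N ≤ (verts I).length → Wins k n m₀ r' b') (m : ℕ) :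
    ∀ r' b' I W, r ⊆ r' → Stack r' b' T I W [] → I.length ≤ k →
      m₀ + 3 * (N - ((verts I).length + (verts W).length)) + 2 * I.length + 3 * W.length ≤ m →
      Wins k n m r' b' := by
  induction m using Nat.strong_induction_on with
  | _ m ih =>
  intro r' b' I W hr h hI hm
  by_cases hdone : I.length < k ∧ N ≤ (verts I).length ∧ W = []
  · obtain ⟨hIk, hN, rfl⟩ := hdone
    exact (hcover r' b' I hr h hIk hN).mono_rounds (by omega)
  obtain hIk | hIk := hI.eq_or_lt
  · obtain ⟨m, rfl⟩ := Nat.exists_eq_add_of_le' (show 1 ≤ m by omega)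
    refine h.close hIk hk fun b'' I' G h' hlen hcov => ih m (by omega) _ _ _ _ hr h' (by omega) ?_
    rw [hcov, List.length_cons]
    omega
  · obtain ⟨F, W', h', hW⟩ := h.exists_waiting
    have hm' : m₀ + 3 * (N - ((verts I).length + (verts (F :: W')).length)) + 2 * I.length +
        3 * (W'.length + 1) ≤ m := by
      obtain rfl | ⟨rfl, rfl, hF⟩ := hW
      · exact hm
      · simp only [hIk, and_true, true_and, not_le] at hdone
        simp only [verts_cons, verts_nil, hF, List.length_append, List.length_cons,
          List.length_nil] at hm ⊢
        omega
    obtain ⟨m, rfl⟩ := Nat.exists_eq_add_of_le' (show 1 ≤ m by omega)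
    refine h'.place (fun _ => rfl) (fun r'' hr' h'' => ?_) (fun b'' I' G h'' hlen hcov => ?_)
    · refine ih m (by omega) _ _ _ _ (hr.trans hr') h'' hIk ?_
      simp only [verts_cons, List.length_append, List.length_cons] at hm' ⊢
      omega
    · refine ih m (by omega) _ _ _ _ hr h'' (by omega) ?_
      rw [hcov, List.length_cons]
      omega

theorem Stack.cut (h : Stack r b T (I ++ [P]) [] T₀) :
    ∃ W, Stack r b T I W (P.1 :: T₀) ∧ W.length ≤ 1 ∧ (verts W).length = P.2.length := by
  obtain ⟨W, hW, hlen, hblue⟩ := exists_verts_eq P.2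
  refine ⟨W, ⟨?_, by simpa using h.red, fun p hp => ?_⟩, hlen, hW ▸ rfl⟩
  · rw [hW]
    exact nodup_of_count_le h.nodup (by grind [verts_append, verts_cons, verts_nil])
  · obtain hp | hp := List.mem_append.1 hp
    · exact h.blue p (by simp [hp])
    · rw [hblue p hp]
      exact (h.blue P (by simp)).tail

/-- The red path is extended at its top as long as a waiting path is available; otherwise the lowest
stacked path gives up its head to the trunk and becomes the waiting path. -/
theorem Wins.cut_stack {ℓ s : ℕ} (m₀ : ℕ) (hN : n + ℓ ≤ N)
    (htrunk : ∀ r' b' I W T₀, r ⊆ r' → Stack r' b' T I W T₀ → I.length + T₀.length = ℓ →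
      I.length + W.length ≤ s → N ≤ (verts I ++ verts W ++ T₀).length → Wins k n m₀ r' b') (m : ℕ) :
    ∀ r' b' I W T₀, r ⊆ r' → Stack r' b' T I W T₀ → W.length ≤ 1 → I.length + T₀.length ≤ ℓ →
      I.length + W.length ≤ s → N ≤ (verts I ++ verts W ++ T₀).length →
      m₀ + 3 * I.length + 2 * W.length + 2 * (ℓ - (I.length + T₀.length)) ≤ m →
      Wins k n m r' b' := by
  induction m using Nat.strong_induction_on with
  | _ m ih =>
  intro r' b' I W T₀ hr h hW hℓ hs hcov hm
  obtain hℓ | hℓ := hℓ.eq_or_lt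
  · exact (htrunk r' b' I W T₀ hr h hℓ hs hcov).mono_rounds (by omega)
  obtain ⟨m, rfl⟩ := Nat.exists_eq_add_of_le' (show 1 ≤ m by omega)
  obtain _ | ⟨F, W⟩ := W
  · obtain rfl | ⟨I, P, rfl⟩ := I.eq_nil_or_concat'
    · simp only [verts_nil, List.nil_append, List.length_nil] at hcov hℓ
      omega
    obtain ⟨W, hcut, hW, hlen⟩ := h.cut
    refine (ih m (by omega) _ _ _ _ _ hr hcut hW ?_ ?_ ?_ ?_).mono_rounds (by omega)
    all_goals
      simp only [verts_append, verts_cons, verts_nil, List.length_append, List.length_cons,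
        List.length_nil] at hℓ hs hcov hm ⊢
      omega
  obtain rfl : W = [] := by simpa using hW
  by_cases hI : I = []
  · subst hI
    refine Wins.of_isWalk (h.blue F (by simp)) ?_ ?_
    · exact nodup_of_count_le h.nodup (by grind [verts_cons, verts_nil])
    · simp only [verts_cons, verts_nil, List.length_append, List.length_cons,
        List.length_nil] at hcov hℓ ⊢
      omega
  refine h.place (fun hI' => absurd hI' hI) (fun r'' hr' h' => ?_) (fun b'' I' G h' hlen hsum => ?_)
  · refine ih m (by omega) _ _ _ _ _ (hr.trans hr') h' (by simp) ?_ ?_ ?_ ?_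
    all_goals
      simp only [verts_cons, verts_nil, List.length_append, List.length_cons,
        List.length_nil] at hℓ hs hcov hm ⊢
      omega
  · refine ih m (by omega) _ _ _ _ _ hr h' hW ?_ ?_ ?_ ?_
    all_goals
      simp only [verts_cons, verts_nil, List.length_append, List.length_cons,
        List.length_nil] at hℓ hs hcov hm hsum ⊢
      omega

end Stack

/-! ### Two blue paths and a red triangle -/

section TwoPaths

variable {k n m : ℕ} {r b : Set (Sym2 ℕ)} {l T A B P Q : List ℕ} {u v c d p q p' q' : ℕ}

theorem Wins.ask_all (es : List (Sym2 ℕ)) (hes : ∀ e ∈ es, ¬e.IsDiag) :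
    ∀ r b, (∀ r' b', r ⊆ r' → b ⊆ b' → (∀ e ∈ es, e ∈ r' ∪ b') → Wins k n m r' b') →
      Wins k n (m + es.length) r b := by
  induction es with
  | nil => exact fun r b h => h r b subset_rfl subset_rfl (by simp)
  | cons e es ih =>
    intro r b h
    induction e with
    | _ u v =>
    obtain ⟨he, hes⟩ := List.forall_mem_cons.1 hes
    refine Wins.ask (u := u) (v := v) (by simpa using he) ?_ ?_
    all_goals
      exact ih hes _ _ fun r' b' hr hb hcol => h r' b' (by grind) (by grind) (by grind)

theorem IsWalk.exists_edges (h : IsWalk b l) :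
    ∃ es : List (Sym2 ℕ), es.length ≤ l.length ∧ (∀ e ∈ es, e ∈ b) ∧
      ∀ r, (∀ e ∈ es, e ∈ r) → IsWalk r l := by
  induction l with
  | nil => exact ⟨[], by simp⟩
  | cons u l ih =>
    obtain _ | ⟨v, l⟩ := l
    · exact ⟨[], by simp⟩
    obtain ⟨huv, hl⟩ := isWalk_cons_cons.1 h
    obtain ⟨es, hlen, hes, hwalk⟩ := ih hl
    exact ⟨s(u, v) :: es, by simpa using hlen, by simpa using ⟨huv, hes⟩,
      fun r hr => isWalk_cons_cons.2 ⟨hr _ (by simp), hwalk r fun e he => hr e (by simp [he])⟩⟩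

/-- Disjoint blue paths avoiding `T`, with the initial segments `A` and `B` split off. -/
structure PathPair (b : Set (Sym2 ℕ)) (T A P B Q : List ℕ) : Prop where
  nodup : (T ++ (A ++ P ++ (B ++ Q))).Nodup
  left : IsWalk b (A ++ P)
  right : IsWalk b (B ++ Q)

theorem PathPair.mono {b' : Set (Sym2 ℕ)} (hb : b ⊆ b') (h : PathPair b T A P B Q) :
    PathPair b' T A P B Q :=
  ⟨h.nodup, h.left.mono hb, h.right.mono hb⟩

theorem PathPair.exists_isWalk_cons (h : PathPair b T A P B Q) (hc : c ∈ A) (hd : d ∈ B) :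
    ∃ C D, IsWalk b (c :: C) ∧ IsWalk b (d :: D) ∧ (T ++ (c :: C ++ d :: D)).Nodup ∧
      P.length + Q.length ≤ C.length + D.length := by
  obtain ⟨hnd, hP, hQ⟩ := h
  obtain ⟨A₁, A₂, rfl⟩ := List.append_of_mem hc
  obtain ⟨B₁, B₂, rfl⟩ := List.append_of_mem hd
  simp only [List.append_assoc, List.cons_append] at hP hQ
  exact ⟨A₂ ++ P, B₂ ++ Q, (isWalk_append.1 hP).2.1, (isWalk_append.1 hQ).2.1,
    nodup_of_count_le hnd (by grind), by simp only [List.length_append]; omega⟩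

theorem PathPair.wins_of_edge (h : PathPair b T A P B Q) (hn : n ≤ P.length + Q.length)
    (hc : c ∈ A) (hd : d ∈ B) (he : s(c, d) ∈ b) : Wins k n m r b := by
  obtain ⟨C, D, hC, hD, hnd, hlen⟩ := h.exists_isWalk_cons hc hd
  refine Wins.of_isWalk (hC.join hD he) (nodup_of_count_le hnd (by grind)) ?_
  simp only [List.length_append, List.length_reverse, List.length_cons]
  omega

theorem PathPair.wins_of_cherry (h : PathPair b T A P B Q) (hn : n ≤ P.length + Q.length)
    (hv : v ∈ T) (hc : c ∈ A) (hd : d ∈ B) (hvc : s(v, c) ∈ b) (hvd : s(v, d) ∈ b) :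
    Wins k n m r b := by
  obtain ⟨C, D, hC, hD, hnd, hlen⟩ := h.exists_isWalk_cons hc hd
  obtain ⟨T₁, T₂, rfl⟩ := List.append_of_mem hv
  refine Wins.of_isWalk (hC.join (isWalk_cons_cons.2 ⟨hvd, hD⟩) (by rwa [Sym2.eq_swap]))
    (nodup_of_count_le hnd (by grind)) ?_
  simp only [List.length_append, List.length_reverse, List.length_cons]
  omega

/-- The path alternating between two paths, which are given by the list of pairs of their
vertices. -/
def zigzag (L : List (ℕ × ℕ)) : List ℕ :=
  L.flatMap fun x => [x.1, x.2]

theorem length_zigzag (L : List (ℕ × ℕ)) : (zigzag L).length = 2 * L.length := by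
  simp [zigzag, mul_comm]

theorem zigzag_perm (L : List (ℕ × ℕ)) :
    (zigzag L).Perm (L.map Prod.fst ++ L.map Prod.snd) := by
  induction L with
  | nil => rfl
  | cons x L ih => exact ((ih.cons x.2).trans List.perm_middle.symm).cons x.1

/-- The edges of the complete bipartite graph with parts `A` and `B`. -/
def edgesBetween (A B : List ℕ) : Set (Sym2 ℕ) :=
  {e | ∃ c ∈ A, ∃ d ∈ B, e = s(c, d)}

theorem isWalk_zigzag (L : List (ℕ × ℕ)) :
    IsWalk (edgesBetween (L.map Prod.fst) (L.map Prod.snd)) (zigzag L) := by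
  induction L with
  | nil => exact isWalk_nil
  | cons x L ih =>
    refine isWalk_cons_cons.2 ⟨⟨x.1, by simp, x.2, by simp, rfl⟩, ?_⟩
    obtain _ | ⟨y, L⟩ := L
    · exact isWalk_singleton
    refine isWalk_cons_cons.2 ⟨⟨y.1, by simp, x.2, by simp, Sym2.eq_swap⟩, ih.mono ?_⟩
    rintro _ ⟨c, hc, d, hd, rfl⟩
    exact ⟨c, List.mem_cons_of_mem _ hc, d, List.mem_cons_of_mem _ hd, rfl⟩

theorem hasCycle_of_isWalk (hw : IsWalk r (p :: l ++ [q])) (hnd : (u :: v :: (p :: l ++ [q])).Nodup)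
    (huv : s(u, v) ∈ r) (hup : s(u, p) ∈ r) (hvq : s(v, q) ∈ r) : HasCycle (l.length + 4) r := by
  refine ⟨u, p :: l ++ [q, v], nodup_of_count_le hnd (by grind), by simp, ?_⟩
  have hwalk : IsWalk r (u :: (p :: l ++ [q])) := isWalk_cons_cons.2 ⟨hup, hw⟩
  have hback : IsWalk r [v, u] := isWalk_cons_cons.2 ⟨by rwa [Sym2.eq_swap], isWalk_singleton⟩
  simpa using isWalk_append.2 ⟨hwalk, hback,
    by simpa [List.getLast?_append, List.getLast?_cons, Sym2.eq_swap] using hvq⟩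

theorem exists_pair_sublist {α : Type*} {l : List α} {X Y : α → Prop} (hl : l.length = 3)
    (hXY : ∀ v ∈ l, X v ∨ Y v) : ∃ u v, [u, v].Sublist l ∧ (X u ∧ X v ∨ Y u ∧ Y v) := by
  obtain ⟨x, y, z, rfl⟩ := List.length_eq_three.1 hl
  have pigeonhole :
      (X x ∧ X y ∨ Y x ∧ Y y) ∨ (X x ∧ X z ∨ Y x ∧ Y z) ∨ (X y ∧ X z ∨ Y y ∧ Y z) := by
    simp only [List.forall_mem_cons] at hXY
    tauto
  obtain h | h | h := pigeonhole
  exacts [⟨x, y, by simp, h⟩, ⟨x, z, by simp, h⟩, ⟨y, z, by simp, h⟩]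

/-- The red path `zigzag L` without one of its ends has an odd number of vertices, and a red edge
both ends of which see both ends of it closes an odd cycle. -/
theorem hasCycle_of_zigzag {L : List (ℕ × ℕ)} (hT : IsTriangle r T)
    (hw : IsWalk r (zigzag ((p, q) :: L ++ [(p', q')])))
    (hnd : (T ++ zigzag ((p, q) :: L ++ [(p', q')])).Nodup)
    (hred : ∀ v ∈ T, s(v, p) ∈ r ∧ s(v, p') ∈ r ∨ s(v, q) ∈ r ∧ s(v, q') ∈ r) :
    HasCycle (2 * L.length + 5) r := by
  rw [show zigzag ((p, q) :: L ++ [(p', q')]) = p :: q :: (zigzag L ++ [p', q']) by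
    simp [zigzag]] at hw hnd
  obtain ⟨u, v, huvT, h⟩ := exists_pair_sublist hT.1 hred
  have huv : s(u, v) ∈ r := List.pairwise_pair.1 (hT.2.sublist huvT)
  have hnd' : (u :: v :: p :: q :: (zigzag L ++ [p', q'])).Nodup :=
    hnd.sublist (huvT.append_right _)
  obtain ⟨⟨hup, -⟩, -, hvp'⟩ | ⟨⟨huq, -⟩, -, hvq'⟩ := h
  · have hw' : IsWalk r (p :: (q :: zigzag L) ++ [p']) := by
      have : IsWalk r ((p :: (q :: zigzag L) ++ [p']) ++ [q']) := by simpa using hw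
      exact (isWalk_append.1 this).1
    simpa [length_zigzag] using
      hasCycle_of_isWalk hw' (nodup_of_count_le hnd' (by grind)) huv hup hvp'
  · have hw' : IsWalk r (q :: (zigzag L ++ [p']) ++ [q']) := by simpa using hw.tail
    simpa [length_zigzag] using
      hasCycle_of_isWalk hw' (nodup_of_count_le hnd' (by grind)) huv huq hvq'

theorem PathPair.wins_of_colored {L M : List (ℕ × ℕ)} (hM : M = (p, q) :: L ++ [(p', q')])
    (hT : IsTriangle r T) (h : PathPair b T (M.map Prod.fst) P (M.map Prod.snd) Q)
    (hn : n ≤ P.length + Q.length) (hnd : (T ++ zigzag M).Nodup)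
    (hwalk : IsWalk (edgesBetween (M.map Prod.fst) (M.map Prod.snd) ∩ (r ∪ b)) (zigzag M))
    (hcol : ∀ v ∈ T, ∀ c ∈ [p, p', q, q'], s(v, c) ∈ r ∪ b) :
    Wins (2 * L.length + 5) n m r b := by
  by_cases hedge : ∃ c ∈ M.map Prod.fst, ∃ d ∈ M.map Prod.snd, s(c, d) ∈ b
  · obtain ⟨c, hc, d, hd, he⟩ := hedge
    exact h.wins_of_edge hn hc hd he
  by_cases hcherry : ∃ v ∈ T, ∃ c ∈ [p, p'], ∃ d ∈ [q, q'], s(v, c) ∈ b ∧ s(v, d) ∈ b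
  · obtain ⟨v, hv, c, hc, d, hd, hvc, hvd⟩ := hcherry
    exact h.wins_of_cherry hn hv (by grind) (by grind) hvc hvd
  have hred : IsWalk r (zigzag M) := hwalk.mono <| by
    rintro _ ⟨⟨c, hc, d, hd, rfl⟩, he⟩
    exact he.resolve_right fun he' => hedge ⟨c, hc, d, hd, he'⟩
  subst hM
  refine Wins.of_hasCycle (hasCycle_of_zigzag hT hred hnd fun v hv => ?_)
  have hcolv := hcol v hv
  simp only [List.forall_mem_cons, Set.mem_union] at hcolv
  by_contra hnred
  refine hcherry ⟨v, hv, ?_⟩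
  simp only [List.exists_mem_cons_iff]
  tauto

theorem PathPair.wins {L : List (ℕ × ℕ)} (hT : IsTriangle r T)
    (h : PathPair b T (((p, q) :: L ++ [(p', q')]).map Prod.fst) P
      (((p, q) :: L ++ [(p', q')]).map Prod.snd) Q) (hn : n ≤ P.length + Q.length) :
    Wins (2 * L.length + 5) n (2 * L.length + 16) r b := by
  set M := (p, q) :: L ++ [(p', q')] with hM
  have hnd : (T ++ zigzag M).Nodup := nodup_of_count_le h.nodup fun v => by
    have := (zigzag_perm M).count_eq v
    simp only [List.count_append] at this ⊢
    omega
  have hends : ∀ c ∈ [p, p', q, q'], c ∈ zigzag M := by simp [M, zigzag]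
  obtain ⟨es, hlen, hes, hwalk⟩ := (isWalk_zigzag M).exists_edges
  have hlen' : es.length + T.length * 4 ≤ 2 * L.length + 16 := by
    simp only [length_zigzag, hM, List.length_append, List.length_cons, List.length_nil] at hlen
    have := hT.1
    omega
  set es' := es ++ (T ×ˢ [p, p', q, q']).map fun x => s(x.1, x.2) with hes'
  have hdiag : ∀ e ∈ es', ¬e.IsDiag := by
    intro e he hdiag
    obtain he | he := List.mem_append.1 he
    · obtain ⟨c, hc, d, hd, rfl⟩ := hes e he
      obtain rfl : c = d := hdiag
      exact h.nodup.of_append_right.disjoint (List.mem_append_left _ hc) (List.mem_append_left _ hd)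
    · obtain ⟨⟨v, c⟩, hvc, rfl⟩ := List.mem_map.1 he
      obtain ⟨hv, hc⟩ := List.pair_mem_product.1 hvc
      obtain rfl : v = c := hdiag
      exact hnd.disjoint hv (hends _ hc)
  refine (Wins.ask_all (m := 0) es' hdiag _ _ fun r' b' hr hb hcol => ?_).mono_rounds
    (by simpa [hes', List.length_product] using hlen')
  refine (h.mono hb).wins_of_colored hM (hT.mono hr) hn hnd (hwalk _ fun e he => ?_)
    fun v hv c hc => ?_
  · exact ⟨hes e he, hcol e (List.mem_append_left _ he)⟩
  · exact hcol _ (List.mem_append_right _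
      (List.mem_map.2 ⟨(v, c), List.pair_mem_product.2 ⟨hv, hc⟩, rfl⟩))

theorem IsTriangle.wins_of_two_paths (hk : 5 ≤ k) (hodd : Odd k) (hT : IsTriangle r T)
    (hP : IsWalk b P) (hQ : IsWalk b Q) (hnd : (T ++ (P ++ Q)).Nodup)
    (hn : n + k ≤ P.length + Q.length) : Wins k n (k + 11) r b := by
  by_cases hPn : n ≤ P.length
  · exact Wins.of_isWalk hP hnd.of_append_right.of_append_left hPn
  by_cases hQn : n ≤ Q.length
  · exact Wins.of_isWalk hQ hnd.of_append_right.of_append_right hQn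
  obtain ⟨j, rfl⟩ : ∃ j, k = 2 * j + 5 := by
    obtain ⟨i, rfl⟩ := hodd
    exact ⟨i - 2, by omega⟩
  set M := (P.take (j + 2)).zip (Q.take (j + 2))
  have hMP : M.map Prod.fst = P.take (j + 2) := List.map_fst_zip (by simp; omega)
  have hMQ : M.map Prod.snd = Q.take (j + 2) := List.map_snd_zip (by simp; omega)
  have hlen : M.length = j + 2 := by simp [M]; omega
  obtain ⟨⟨p, q⟩, M', hM⟩ := List.exists_cons_of_length_pos (by omega : 0 < M.length)
  obtain rfl | ⟨L, ⟨p', q'⟩, rfl⟩ := M'.eq_nil_or_concat'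
  · simp [hM] at hlen
  obtain rfl : L.length = j := by simpa [hM] using hlen
  have hpair : PathPair b T (M.map Prod.fst) (P.drop (L.length + 2)) (M.map Prod.snd)
      (Q.drop (L.length + 2)) := by
    constructor <;> simpa only [hMP, hMQ, List.take_append_drop]
  rw [hM] at hpair
  exact hpair.wins hT (by simp only [List.length_drop]; omega)

theorem IsTriangle.wins_of_paths {S : List (List ℕ)} (hk : 5 ≤ k) (hodd : Odd k)
    (hT : IsTriangle r T) (hnd : (T ++ S.flatten).Nodup) (hS : ∀ l ∈ S, IsWalk b l)
    (hlen : S.length ≤ 2) (hn : n + k ≤ S.flatten.length) : Wins k n (k + 11) r b := by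
  obtain _ | ⟨P, _ | ⟨Q, _ | ⟨_, S⟩⟩⟩ := S
  · simp only [List.flatten_nil, List.length_nil] at hn
    omega
  · simp only [List.flatten_cons, List.flatten_nil, List.append_nil] at hnd hn
    exact Wins.of_isWalk (hS P (by simp)) hnd.of_append_right (by omega)
  · simp only [List.flatten_cons, List.flatten_nil, List.append_nil] at hnd hn
    exact hT.wins_of_two_paths hk hodd (hS P (by simp)) (hS Q (by simp)) hnd (by simpa using hn)
  · simp at hlen

end TwoPaths

/-! ### Merging blue paths along a red trunk -/

section Trunk

variable {k n N : ℕ} {r b : Set (Sym2 ℕ)} {T R₁ D R₂ p q U V : List ℕ} {S S' : List (List ℕ)}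
  {c s t u v : ℕ}

/-- `u` is one of the two ends of the path `p`. -/
def IsEnd (u : ℕ) (p : List ℕ) : Prop :=
  u ∈ p.head? ∨ u ∈ p.getLast?

theorem IsEnd.mem (h : IsEnd u p) : u ∈ p :=
  h.elim List.mem_of_mem_head? List.mem_of_mem_getLast?

theorem IsEnd.of_reverse_append {P : List ℕ} (h : IsEnd v (U.reverse ++ u :: c :: P))
    (hP : P ≠ []) : IsEnd v (u :: U) ∨ IsEnd v P := by
  refine h.imp (fun hv => Or.inr ?_) (fun hv => Or.inr ?_)
  · rw [show U.reverse ++ u :: c :: P = (u :: U).reverse ++ c :: P by simp] at hv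
    simpa only [List.head?_append, List.head?_reverse, List.getLast?_cons, Option.some_or] using hv
  · obtain ⟨P, w, rfl⟩ := P.eq_nil_or_concat'.resolve_left hP
    simpa [List.getLast?_append, List.getLast?_cons] using hv

/-- A red path `R₁ ++ D ++ R₂` and disjoint nonempty blue paths `S` avoiding `T` and `R₁ ++ R₂`.
The vertices of `D` may have been used up as inner vertices of members of `S`. -/
structure Trunk (r b : Set (Sym2 ℕ)) (T R₁ D R₂ : List ℕ) (S : List (List ℕ)) : Prop where
  red : IsWalk r (R₁ ++ D ++ R₂)
  nodup_red : (R₁ ++ D ++ R₂).Nodup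
  nodup : (T ++ (S.flatten ++ (R₁ ++ R₂))).Nodup
  blue : ∀ p ∈ S, p ≠ [] ∧ IsWalk b p
  isEnd_notMem : ∀ p ∈ S, ∀ u, IsEnd u p → u ∉ D

theorem Trunk.mono {r' b' : Set (Sym2 ℕ)} (hr : r ⊆ r') (hb : b ⊆ b')
    (h : Trunk r b T R₁ D R₂ S) : Trunk r' b' T R₁ D R₂ S :=
  ⟨h.red.mono hr, h.nodup_red, h.nodup, fun p hp => ⟨(h.blue p hp).1, (h.blue p hp).2.mono hb⟩,
    h.isEnd_notMem⟩

theorem Trunk.perm (hS : S.Perm S') (h : Trunk r b T R₁ D R₂ S) : Trunk r b T R₁ D R₂ S' := by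
  refine ⟨h.red, h.nodup_red, nodup_of_count_le h.nodup fun v => ?_,
    fun p hp => h.blue p (hS.mem_iff.2 hp), fun p hp => h.isEnd_notMem p (hS.mem_iff.2 hp)⟩
  simp only [List.count_append, hS.flatten.count_eq v, le_refl]

theorem Trunk.notMem (h : Trunk r b T R₁ D R₂ S) (hp : p ∈ S) (hu : u ∈ p) : u ∉ R₁ ++ R₂ :=
  h.nodup.of_append_right.disjoint (List.mem_flatten_of_mem hp hu)

/-- The red path from `s` to `t` and the vertex `u` would form a red `C_k`. -/
theorem Trunk.exists_blue_edge (h : Trunk r b T (s :: R₁) D (t :: R₂) S)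
    (hk : R₁.length + D.length + 3 = k) (hcycle : ¬HasCycle k r) (hp : p ∈ S) (hu : IsEnd u p)
    (hcol : ∀ c ∈ [s, t], s(c, u) ∈ r ∪ b) : s(s, u) ∈ b ∨ s(t, u) ∈ b := by
  simp only [List.forall_mem_cons, Set.mem_union] at hcol
  by_contra hblue
  have hsu : s(s, u) ∈ r := by tauto
  have htu : s(t, u) ∈ r := by tauto
  refine hcycle ⟨u, s :: (R₁ ++ D) ++ [t], ?_, by simp; omega, ?_⟩
  · have huR := h.notMem hp hu.mem
    have huD := h.isEnd_notMem p hp u hu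
    have hR : (u :: (s :: R₁ ++ D ++ t :: R₂)).Nodup :=
      List.nodup_cons.2 ⟨by grind, h.nodup_red⟩
    exact nodup_of_count_le hR (by grind)
  · have hpath : IsWalk r (s :: (R₁ ++ D) ++ [t]) := by
      have : IsWalk r ((s :: (R₁ ++ D) ++ [t]) ++ R₂) := by simpa using h.red
      exact (isWalk_append.1 this).1
    have : IsWalk r (u :: (s :: (R₁ ++ D) ++ [t])) :=
      isWalk_cons_cons.2 ⟨by rwa [Sym2.eq_swap], hpath⟩
    exact isWalk_append.2 ⟨this, isWalk_singleton,
      by simpa [List.getLast?_append, List.getLast?_cons] using htu⟩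

theorem Trunk.merge (h : Trunk r b T (s :: R₁) D (t :: R₂) ((u :: U) :: (v :: V) :: S))
    (hc : c ∈ [s, t]) (hcu : s(c, u) ∈ b) (hcv : s(c, v) ∈ b) :
    Trunk r b T R₁ (D ++ [t]) R₂ ((U.reverse ++ u :: c :: v :: V) :: S) := by
  have hnd : (U.reverse ++ u :: c :: v :: V ++ S.flatten).Nodup ∧
      (T ++ (((U.reverse ++ u :: c :: v :: V) :: S).flatten ++ (R₁ ++ R₂))).Nodup := by
    obtain rfl | rfl : c = s ∨ c = t := by simpa using hc
    all_goals exact ⟨nodup_of_count_le h.nodup (by grind), nodup_of_count_le h.nodup (by grind)⟩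
  refine ⟨by simpa using h.red.tail, by simpa using h.nodup_red.of_cons, hnd.2, ?_, ?_⟩
  · refine List.forall_mem_cons.2 ⟨⟨by simp, ?_⟩, fun p hp => h.blue p (by simp [hp])⟩
    exact (h.blue (u :: U) (by simp)).2.join
      (isWalk_cons_cons.2 ⟨hcv, (h.blue (v :: V) (by simp)).2⟩) (by rwa [Sym2.eq_swap])
  · have hend : ∀ p ∈ (u :: U) :: (v :: V) :: S, ∀ w, IsEnd w p → w ∉ D ++ [t] := by
      intro p hp w hw
      have := h.notMem hp hw.mem
      have := h.isEnd_notMem p hp w hw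
      grind
    refine List.forall_mem_cons.2 ⟨fun w hw => ?_, fun p hp => hend p (by simp [hp])⟩
    obtain hw | hw := hw.of_reverse_append (by simp)
    exacts [hend _ (by simp) w hw, hend _ (by simp) w hw]

theorem Trunk.exists_merge (h : Trunk r b T (s :: R₁) D (t :: R₂) S)
    (hpq : [p, q].Sublist S) (hc : c ∈ [s, t]) (hp : ∃ u ∈ p.head?, s(c, u) ∈ b)
    (hq : ∃ u ∈ q.head?, s(c, u) ∈ b) :
    ∃ S', Trunk r b T R₁ (D ++ [t]) R₂ S' ∧ S'.length + 1 = S.length ∧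
      S.flatten.length ≤ S'.flatten.length := by
  obtain ⟨S', hperm⟩ := hpq.exists_perm_append
  obtain ⟨u, hu, hcu⟩ := hp
  obtain ⟨v, hv, hcv⟩ := hq
  obtain ⟨U, rfl⟩ := List.head?_eq_some_iff.1 hu
  obtain ⟨V, rfl⟩ := List.head?_eq_some_iff.1 hv
  rw [List.cons_append, List.cons_append, List.nil_append] at hperm
  refine ⟨_, (h.perm hperm).merge hc hcu hcv, by simp [hperm.length_eq], ?_⟩
  rw [hperm.flatten.length_eq]
  simp only [List.flatten_cons, List.length_append, List.length_cons, List.length_reverse]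
  omega

theorem Trunk.exists_merge_of_colored (h : Trunk r b T (s :: R₁) D (t :: R₂) S)
    (hk : R₁.length + D.length + 3 = k) (hcycle : ¬HasCycle k r) (hS : 3 ≤ S.length)
    (hcol : ∀ u ∈ (S.take 3).filterMap List.head?, ∀ c ∈ [s, t], s(c, u) ∈ r ∪ b) :
    ∃ S', Trunk r b T R₁ (D ++ [t]) R₂ S' ∧ S'.length + 1 = S.length ∧
      S.flatten.length ≤ S'.flatten.length := by
  have hblue : ∀ p ∈ S.take 3, (∃ u ∈ p.head?, s(s, u) ∈ b) ∨ ∃ u ∈ p.head?, s(t, u) ∈ b := by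
    intro p hp
    have hpS := List.mem_of_mem_take hp
    obtain ⟨u, hu⟩ := Option.isSome_iff_exists.1 (List.isSome_head?.2 (h.blue p hpS).1)
    exact (h.exists_blue_edge hk hcycle hpS (Or.inl hu)
      (hcol u (List.mem_filterMap.2 ⟨p, hp, hu⟩))).imp (⟨u, hu, ·⟩) (⟨u, hu, ·⟩)
  obtain ⟨p, q, hpq, ⟨hp, hq⟩ | ⟨hp, hq⟩⟩ := exists_pair_sublist (by simpa using hS) hblue
  all_goals exact h.exists_merge (hpq.trans (S.take_sublist 3)) (by simp) hp hq

theorem Trunk.wins_of_merge {m : ℕ} (h : Trunk r b T (s :: R₁) D (t :: R₂) S)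
    (hk : R₁.length + D.length + 3 = k) (hS : 3 ≤ S.length)
    (hmerge : ∀ r' b' S', r ⊆ r' → Trunk r' b' T R₁ (D ++ [t]) R₂ S' → S'.length + 1 = S.length →
      S.flatten.length ≤ S'.flatten.length → Wins k n m r' b') : Wins k n (m + 6) r b := by
  set heads := (S.take 3).filterMap List.head?
  have hlen : ([s, t] ×ˢ heads).length ≤ 6 := by
    have : heads.length ≤ (S.take 3).length := List.length_filterMap_le _ _
    simp only [List.length_product, List.length_cons, List.length_nil, List.length_take] at this ⊢
    omega
  refine (Wins.ask_all (m := m) (([s, t] ×ˢ heads).map fun x => s(x.1, x.2)) ?_ _ _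
    fun r' b' hr hb hcol => ?_).mono_rounds (by simpa using hlen)
  · intro e he hdiag
    obtain ⟨⟨c, u⟩, hcu, rfl⟩ := List.mem_map.1 he
    obtain ⟨hc, hu⟩ := List.pair_mem_product.1 hcu
    obtain rfl : c = u := hdiag
    obtain ⟨p, hp, hcp⟩ := List.mem_filterMap.1 hu
    exact h.notMem (List.mem_of_mem_take hp) (List.mem_of_mem_head? hcp) (by grind)
  by_cases hcycle : HasCycle k r'
  · exact Wins.of_hasCycle hcycle
  obtain ⟨S', h', hS', hflat⟩ := (h.mono hr hb).exists_merge_of_colored hk hcycle hS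
    fun u hu c hc => hcol _ (List.mem_map.2 ⟨(c, u), List.pair_mem_product.2 ⟨hc, hu⟩, rfl⟩)
  exact hmerge r' b' S' hr h' hS' hflat

theorem Wins.merge_trunk (m₀ : ℕ)
    (hend : ∀ r' b' (S : List (List ℕ)), r ⊆ r' → (T ++ S.flatten).Nodup → (∀ p ∈ S, IsWalk b' p) →
      S.length ≤ 2 → N ≤ S.flatten.length → Wins k n m₀ r' b') (j : ℕ) :
    ∀ r' b' R₁ D R₂ S, r ⊆ r' → Trunk r' b' T R₁ D R₂ S → R₁.length = j → R₂.length = j →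
      j + D.length + 2 = k → S.length ≤ j + 2 → N ≤ S.flatten.length →
      Wins k n (m₀ + 6 * j) r' b' := by
  induction j with
  | zero =>
    intro r' b' R₁ D R₂ S hr h _ _ _ hS hN
    exact hend r' b' S hr (nodup_of_count_le h.nodup (by grind)) (fun p hp => (h.blue p hp).2) hS hN
  | succ j ih =>
    intro r' b' R₁ D R₂ S hr h h₁ h₂ hk hS hN
    by_cases hS₂ : S.length ≤ 2
    · exact (hend r' b' S hr (nodup_of_count_le h.nodup (by grind)) (fun p hp => (h.blue p hp).2)
        hS₂ hN).mono_rounds (by omega)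
    obtain ⟨s, R₁, rfl⟩ := List.exists_cons_of_length_eq_add_one h₁
    obtain ⟨t, R₂, rfl⟩ := List.exists_cons_of_length_eq_add_one h₂
    simp only [List.length_cons, Nat.add_right_cancel_iff] at h₁ h₂
    refine h.wins_of_merge (by omega) (by omega) fun r'' b'' S' hr' h' hlen hflat => ?_
    exact ih r'' b'' R₁ (D ++ [t]) R₂ S' (hr.trans hr') h' h₁ h₂ (by simp; omega) (by omega)
      (hN.trans hflat)

theorem Wins.of_trunk {R : List ℕ} (m₀ : ℕ)
    (hend : ∀ r' b' (S : List (List ℕ)), r ⊆ r' → (T ++ S.flatten).Nodup → (∀ p ∈ S, IsWalk b' p) →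
      S.length ≤ 2 → N ≤ S.flatten.length → Wins k n m₀ r' b')
    (hk : 3 ≤ k) (hR : R.length + 5 = 2 * k) (hred : IsWalk r R)
    (hnd : (T ++ (S.flatten ++ R)).Nodup) (hblue : ∀ p ∈ S, IsWalk b p)
    (hS : S.length + 1 ≤ k) (hN : N ≤ S.flatten.length) : Wins k n (m₀ + 6 * (k - 3)) r b := by
  obtain ⟨R₁, d, R₂, rfl, h₁⟩ : ∃ R₁ d R₂, R = R₁ ++ [d] ++ R₂ ∧ R₁.length = k - 3 := by
    refine ⟨R.take (k - 3), R[k - 3], R.drop (k - 3 + 1), ?_, by simp; omega⟩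
    simp only [List.take_append_getElem, List.take_append_drop]
  have hflat : (S.filter (· ≠ [])).flatten = S.flatten := by
    simpa using List.flatten_filter_ne_nil (L := S)
  have hlen := S.length_filter_le (· ≠ [])
  have hd : ∀ p ∈ S, d ∉ p := fun p hp hdp =>
    hnd.of_append_right.disjoint (List.mem_flatten_of_mem hp hdp) (by simp)
  have htrunk : Trunk r b T R₁ [d] R₂ (S.filter (· ≠ [])) := by
    refine ⟨hred, hnd.of_append_right.of_append_right, ?_, fun p hp => ?_, fun p hp u hu => ?_⟩
    · rw [hflat]
      exact nodup_of_count_le hnd (by grind)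
    · obtain ⟨hp, hne⟩ := List.mem_filter.1 hp
      exact ⟨by simpa using hne, hblue p hp⟩
    · have := hd p (List.mem_filter.1 hp).1
      have := hu.mem
      grind
  simp only [List.length_append, List.length_singleton] at hR
  exact Wins.merge_trunk m₀ hend (k - 3) r b R₁ [d] R₂ _ subset_rfl htrunk h₁ (by omega)
    (by simp only [List.length_singleton]; omega) (by omega) (hflat ▸ hN)

end Trunk

/-! ### The game from a red triangle -/

section Main

variable {k n : ℕ} {r b : Set (Sym2 ℕ)} {T T₀ : List ℕ} {I W : List (ℕ × List ℕ)}

theorem IsTriangle.wins_of_trunk (hk : 5 ≤ k) (hodd : Odd k) (hT : IsTriangle r T)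
    (h : Stack r b T I W T₀) (hred : I.length + T₀.length = 2 * k - 5)
    (hblue : I.length + W.length ≤ k - 1)
    (hN : n + 3 * k ≤ (verts I ++ verts W ++ T₀).length) :
    Wins k n (7 * k) r b := by
  set S := I.map Prod.snd ++ W.map fun p => p.1 :: p.2
  set R := I.map Prod.fst ++ T₀
  have hperm : (S.flatten ++ R).Perm (verts I ++ verts W ++ T₀) := by
    refine List.perm_iff_count.2 fun v => ?_
    have hW : (W.map fun p => p.1 :: p.2).flatten = verts W := rfl
    simp only [S, R, List.flatten_append, List.count_append, count_verts I, hW]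
    omega
  have hlen := hperm.length_eq
  have hRlen : R.length = 2 * k - 5 := by simpa [R] using hred
  rw [List.length_append] at hlen
  refine (Wins.of_trunk (S := S) (N := n + k) (k + 11)
    (fun r' b' S' hr hnd hS' hlen' hN' => (hT.mono hr).wins_of_paths hk hodd hnd hS' hlen' hN')
    (by omega) (R := R) (by omega) h.red ?_ ?_ ?_ (by omega)).mono_rounds (by omega)
  · exact (hperm.append_left T).nodup_iff.2 h.nodup
  · intro p hp
    obtain hp | hp := List.mem_append.1 hp
    · obtain ⟨q, hq, rfl⟩ := List.mem_map.1 hp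
      exact (h.blue q (by simp [hq])).tail
    · obtain ⟨q, hq, rfl⟩ := List.mem_map.1 hp
      exact h.blue q (by simp [hq])
  · simp only [S, List.length_append, List.length_map]
    omega

theorem IsTriangle.wins_of_stack (hk : 5 ≤ k) (hodd : Odd k) (hT : IsTriangle r T)
    (h : Stack r b T I [] []) (hI : I.length < k) (hN : n + 3 * k ≤ (verts I).length) :
    Wins k n (14 * k) r b :=
  Wins.cut_stack (ℓ := 2 * k - 5) (s := k - 1) (N := n + 3 * k) (7 * k) (by omega)
    (fun _ _ _ _ _ hr h' hred hblue hN' => (hT.mono hr).wins_of_trunk hk hodd h' hred hblue hN')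
    (14 * k) r b I [] [] subset_rfl h (by simp) (by simp only [List.length_nil]; omega)
    (by simp only [List.length_nil]; omega) (by simpa using hN)
    (by simp only [List.length_nil]; omega)

theorem winsFromTriangle_of_five_le (hk : 5 ≤ k) (hodd : Odd k) :
    WinsFromTriangle k n (23 * k + 6) := by
  intro r b T P Q hT hP hQ hnd
  obtain ⟨V, hV, hVlen, hVP⟩ := exists_verts_eq P
  obtain ⟨W, hW, hWlen, hWQ⟩ := exists_verts_eq Q
  have hstack : Stack r b T [] (V ++ W) [] := by
    refine ⟨by simpa [hV, hW] using hnd, isWalk_nil, fun p hp => ?_⟩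
    obtain hp | hp := List.mem_append.1 (by simpa using hp : p ∈ V ++ W)
    exacts [hVP p hp ▸ hP, hWQ p hp ▸ hQ]
  refine Wins.grow_stack (N := n + 3 * k) (14 * k) (by omega)
    (fun r' b' I hr h hI hN => (hT.mono hr).wins_of_stack hk hodd h hI hN)
    _ r b [] (V ++ W) subset_rfl hstack (Nat.zero_le k) ?_
  simp only [verts_nil, verts_append, hV, hW, List.length_append, List.length_nil]
  omega

theorem IsTriangle.hasCycle (hT : IsTriangle r T) (hnd : T.Nodup) : HasCycle 3 r := by
  obtain ⟨hlen, hred⟩ := hT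
  obtain ⟨x, y, z, rfl⟩ := List.length_eq_three.1 hlen
  obtain ⟨⟨hxy, hxz⟩, hyz⟩ : (s(x, y) ∈ r ∧ s(x, z) ∈ r) ∧ s(y, z) ∈ r := by simpa using hred
  exact ⟨x, [y, z], hnd, rfl, ((isWalk_singleton.cons (by rwa [Sym2.eq_swap])).cons hyz).cons hxy⟩

theorem winsFromTriangle_three : WinsFromTriangle 3 n 0 :=
  fun _ _ _ _ _ hT _ _ hnd => Wins.of_hasCycle (hT.hasCycle hnd.of_append_left)

theorem winsFromTriangle (hk : 3 ≤ k) (hodd : Odd k) : WinsFromTriangle k n (23 * k + 6) := by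
  obtain rfl | hk5 : k = 3 ∨ 5 ≤ k := by grind
  · exact fun r b T P Q hT hP hQ hnd =>
      (winsFromTriangle_three r b T P Q hT hP hQ hnd).mono_rounds (by omega)
  · exact winsFromTriangle_of_five_le hk5 hodd

end Main

/-- For every odd `k ≥ 3` and every `n`, `r̃(C_k, P_n) ≤ 3n + 50k`. -/
theorem online_ramsey_odd_cycle_path (k n : ℕ) (hk : 3 ≤ k) (hko : Odd k) :
    BuilderWinsIn emptyBoard (WinCP k n) (3 * n + 50 * k) := by
  have hwins : Wins k n (3 * n + 50 * k) ∅ ∅ :=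
    ((winsFromTriangle hk hko).wins_of_path (3 * n + 50 * k)).1 ∅ ∅ 0 [] (List.nodup_singleton 0)
      isWalk_singleton (by simp only [List.length_nil]; omega)
  have hfinite : emptyBoard.colored.Finite := by simp [emptyBoard, Board.colored]
  exact (hwins emptyBoard (Set.empty_subset _) (Set.empty_subset _)).builderWinsIn hfinite
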